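/- Assume k : ℝ^d × ℝ^d → ℝ is a symmetric kernel of class C² such that every Gram matrix (k(xⁱ,xʲ))_{i,j=1}^N is positive semidefinite and k together with all its partial derivatives up to order 2 is bounded in absolute value by B, with B ≥ 1. Assume V : ℝ^d → ℝ is twice continuously differentiable with ‖∇²V(x)‖_op ≤ C_V for all x, V(x) > 0 for all x, and ‖∇V(x)‖ ≤ A·V(x)^α for all x, where A > 0 and α ∈ [0,1/2]. Let ν ∈ (0,1]. Then the R-SVGD vector field 𝖳_ν : ℝ^{dN} → ℝ^{dN} is differentiable at every configuration x̲ = (x¹,…,x^N), and the Frobenius (Hilbert–Schmidt) norm of its Jacobian satisfies ‖D𝖳_ν(x̲)‖²_HS ≤ 27·ν⁻⁴·A²·B⁴·N·d·((1/N)Σ_{j=1}^N V(xʲ))^{2α} + 27·ν⁻⁴·B⁴·N·d² + 9·ν⁻²·B²·C_V²·d. -/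

import Mathlib

noncomputable section

/-- Basis directions of `ℝ^d × ℝ^d`, used to express the partial derivatives of a kernel
`k : ℝ^d × ℝ^d → ℝ` with respect to each coordinate of each of its two arguments. -/
def pairBasis (d : ℕ) :
    (Fin d ⊕ Fin d) → EuclideanSpace ℝ (Fin d) × EuclideanSpace ℝ (Fin d) :=
  Sum.elim (fun i => (EuclideanSpace.single i 1, 0)) (fun i => (0, EuclideanSpace.single i 1))

/-- The R-SVGD vector field `𝖳_ν(x̲)`: its `i`-th block is
`Σ_l (((1−ν)K/N + ν I_N)⁻¹)_{i,l} · (1/N) Σ_j (k(x^l,x^j) ∇V(x^j) − ∇₂k(x^l,x^j))`,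
where `K = (k(x^a,x^b))_{a,b}` is the Gram matrix. -/
def steinField (d N : ℕ) (k : EuclideanSpace ℝ (Fin d) → EuclideanSpace ℝ (Fin d) → ℝ)
    (V : EuclideanSpace ℝ (Fin d) → ℝ) (ν : ℝ)
    (x : Fin N → EuclideanSpace ℝ (Fin d)) : Fin N → EuclideanSpace ℝ (Fin d) :=
  fun i => ∑ l : Fin N,
    ((((1 - ν) / (N : ℝ)) • Matrix.of (fun a b : Fin N => k (x a) (x b)) +
        ν • (1 : Matrix (Fin N) (Fin N) ℝ))⁻¹ i l) •
      ((N : ℝ)⁻¹ •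
        ∑ j : Fin N, (k (x l) (x j) • gradient V (x j) - gradient (k (x l)) (x j)))

/-!
The field `T = 𝖳_ν` solves the linear system `M T = F`, where `M = (1 - ν) K / N + ν I` and `F` is
the SVGD field. Since `K` is positive semidefinite, `ν ‖t‖ ≤ ‖M t‖` for every `t`, so `T` is
controlled by `F`. Differentiating the system gives `M · DT[v] = DF[v] - DM[v] T`, and the same
inequality controls `DT[v]` by the right-hand side. If `v` moves a coordinate of the single particle
`i`, the derivative of `k(xˡ, xʲ)` vanishes unless `i ∈ {l, j}`, so only `O(N)` of the `N²` pairs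
contribute. Summing over the `N d` coordinate directions leaves `∑ ‖∇V(xʲ)‖²`, which Jensen's
inequality for the concave power `2α ≤ 1` bounds by a power of the mean of `V`.
-/

section LinearAlgebra

variable {ι : Type*} [Fintype ι] {E : Type*}

theorem sum_inner_sum_smul_nonneg [NormedAddCommGroup E] [InnerProductSpace ℝ E]
    {K : Matrix ι ι ℝ} (hK : K.PosSemidef) (t : ι → E) :
    0 ≤ ∑ l, inner ℝ (t l) (∑ m, K l m • t m) := by
  -- Schur product theorem: the entrywise product of `K` with the Gram matrix of `t` is positive.
  have schur := (hK.hadamard (Matrix.posSemidef_gram ℝ t)).dotProduct_mulVec_nonneg 1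
  simpa [dotProduct, Matrix.mulVec, Matrix.gram_apply, inner_sum, inner_smul_right] using schur

theorem sum_smul_add_smul_one_smul [DecidableEq ι] {R : Type*} [CommSemiring R]
    [AddCommMonoid E] [Module R E] (K : Matrix ι ι R) (c ν : R) (t : ι → E) (l : ι) :
    ∑ m, (c • K + ν • (1 : Matrix ι ι R)) l m • t m = c • (∑ m, K l m • t m) + ν • t l := by
  simp [Matrix.one_apply, add_smul, Finset.sum_add_distrib, Finset.smul_sum, smul_smul, ite_smul]

theorem sq_mul_sum_sq_norm_le_of_posSemidef [DecidableEq ι] [NormedAddCommGroup E]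
    [InnerProductSpace ℝ E] {K : Matrix ι ι ℝ} (hK : K.PosSemidef) {c ν : ℝ} (hc : 0 ≤ c)
    (hν : 0 ≤ ν) (t : ι → E) :
    ν ^ 2 * ∑ l, ‖t l‖ ^ 2 ≤
      ∑ l, ‖∑ m, (c • K + ν • (1 : Matrix ι ι ℝ)) l m • t m‖ ^ 2 := by
  have hcross : 0 ≤ 2 * (c * ν) * ∑ l, inner ℝ (t l) (∑ m, K l m • t m) :=
    mul_nonneg (by positivity) (sum_inner_sum_smul_nonneg hK t)
  calc ν ^ 2 * ∑ l, ‖t l‖ ^ 2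
      ≤ ∑ l, ‖c • ∑ m, K l m • t m‖ ^ 2 + 2 * (c * ν) * ∑ l, inner ℝ (t l) (∑ m, K l m • t m) +
          ν ^ 2 * ∑ l, ‖t l‖ ^ 2 :=
        le_add_of_nonneg_left (add_nonneg (by positivity) hcross)
    _ = ∑ l, ‖c • (∑ m, K l m • t m) + ν • t l‖ ^ 2 := by
        simp only [norm_add_sq_real, norm_smul ν, mul_pow, Real.norm_eq_abs, sq_abs,
          real_inner_smul_left, real_inner_smul_right, Finset.sum_add_distrib, Finset.mul_sum,
          real_inner_comm, mul_assoc]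
    _ = ∑ l, ‖∑ m, (c • K + ν • (1 : Matrix ι ι ℝ)) l m • t m‖ ^ 2 := by
        simp only [sum_smul_add_smul_one_smul]

theorem sum_smul_sum_inv_smul [DecidableEq ι] {R : Type*} [CommRing R] [AddCommGroup E]
    [Module R E] {M : Matrix ι ι R} (hM : IsUnit M.det) (r : ι → E) (l : ι) :
    ∑ m, M l m • ∑ p, M⁻¹ m p • r p = r l := by
  calc ∑ m, M l m • ∑ p, M⁻¹ m p • r p = ∑ p, (M * M⁻¹) l p • r p := by
        simp only [Finset.smul_sum, smul_smul, Matrix.mul_apply, Finset.sum_smul]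
        exact Finset.sum_comm
    _ = r l := by simp [Matrix.mul_nonsing_inv M hM, Matrix.one_apply, ite_smul]

end LinearAlgebra

section Inequalities

theorem norm_le_mul_sqrt_card_of_abs_apply_le {ι : Type*} [Fintype ι] {w : EuclideanSpace ℝ ι}
    {c : ℝ} (hc : 0 ≤ c) (h : ∀ a, |w a| ≤ c) : ‖w‖ ≤ c * √(Fintype.card ι) := by
  rw [EuclideanSpace.norm_eq, ← Real.sqrt_sq hc, ← Real.sqrt_mul (sq_nonneg c)]
  refine Real.sqrt_le_sqrt ?_
  calc ∑ a, ‖w a‖ ^ 2 ≤ ∑ _a : ι, c ^ 2 := by gcongr with a; exact h a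
    _ = c ^ 2 * Fintype.card ι := by simp [mul_comm]

theorem sum_rpow_le_card_mul_mean_rpow {ι : Type*} (s : Finset ι) {v : ι → ℝ}
    (hv : ∀ j ∈ s, 0 ≤ v j) {p : ℝ} (hp : p ∈ Set.Icc (0 : ℝ) 1) :
    ∑ j ∈ s, v j ^ p ≤ s.card * ((s.card : ℝ)⁻¹ * ∑ j ∈ s, v j) ^ p := by
  obtain rfl | hs := s.eq_empty_or_nonempty
  · simp
  have hcard : (0 : ℝ) < s.card := by exact_mod_cast hs.card_pos
  have jensen := (Real.concaveOn_rpow hp.1 hp.2).le_map_sum (t := s)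
    (w := fun _ => (s.card : ℝ)⁻¹) (by intros; positivity) (by simp [hcard.ne']) hv
  simp only [smul_eq_mul, ← Finset.mul_sum] at jensen
  rwa [inv_mul_le_iff₀ hcard] at jensen

theorem norm_add_sq_le_two_mul {F : Type*} [SeminormedAddCommGroup F] (u w : F) :
    ‖u + w‖ ^ 2 ≤ 2 * (‖u‖ ^ 2 + ‖w‖ ^ 2) :=
  (pow_le_pow_left₀ (norm_nonneg _) (norm_add_le u w) 2).trans add_sq_le

theorem norm_sub_sq_le_three_halves_mul_add {F : Type*} [SeminormedAddCommGroup F] (u w : F) :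
    ‖u - w‖ ^ 2 ≤ 3 / 2 * ‖u‖ ^ 2 + 3 * ‖w‖ ^ 2 := by
  have htri : ‖u - w‖ ^ 2 ≤ (‖u‖ + ‖w‖) ^ 2 := by gcongr; exact norm_sub_le u w
  linarith [sq_nonneg (‖u‖ - 2 * ‖w‖)]

/-- The number of occurrences of `i` in the pair `(l, j)`. It controls how strongly a function of
the two particles `x l` and `x j` varies when only the particle `x i` moves. -/
def incidence {ι : Type*} [DecidableEq ι] (i l j : ι) : ℝ :=
  (if l = i then 1 else 0) + (if j = i then 1 else 0)

theorem incidence_nonneg {ι : Type*} [DecidableEq ι] (i l j : ι) : 0 ≤ incidence i l j := by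
  unfold incidence
  positivity

theorem sum_sq_norm_sum_le_of_norm_le_incidence {ι F : Type*} [Fintype ι] [DecidableEq ι]
    [SeminormedAddCommGroup F] {B : ℝ} {i : ι} {h : ι → ℝ} {w : ι → ι → F}
    (hw : ∀ l j, ‖w l j‖ ≤ B * incidence i l j * h j) :
    ∑ l, ‖∑ j, w l j‖ ^ 2 ≤ 2 * B ^ 2 * Fintype.card ι * (∑ j, h j ^ 2 + h i ^ 2) := by
  have hrow (l : ι) : ‖∑ j, w l j‖ ≤ B * ((if l = i then ∑ j, h j else 0) + h i) :=
    calc ‖∑ j, w l j‖ ≤ ∑ j, B * incidence i l j * h j := norm_sum_le_of_le _ fun j _ => hw l j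
      _ = B * ((if l = i then ∑ j, h j else 0) + h i) := by
        simp [incidence, mul_assoc, add_mul, Finset.sum_add_distrib, ← Finset.mul_sum]
  have hrow_sq (l : ι) : ‖∑ j, w l j‖ ^ 2 ≤
      2 * B ^ 2 * ((if l = i then Fintype.card ι * ∑ j, h j ^ 2 else 0) + h i ^ 2) :=
    calc ‖∑ j, w l j‖ ^ 2 ≤ (B * ((if l = i then ∑ j, h j else 0) + h i)) ^ 2 := by
          gcongr; exact hrow l
      _ ≤ B ^ 2 * (2 * ((if l = i then ∑ j, h j else 0) ^ 2 + h i ^ 2)) := by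
          rw [mul_pow]; gcongr; exact add_sq_le
      _ ≤ 2 * B ^ 2 * ((if l = i then Fintype.card ι * ∑ j, h j ^ 2 else 0) + h i ^ 2) := by
          rw [mul_left_comm, ← mul_assoc]
          gcongr
          split_ifs
          · exact sq_sum_le_card_mul_sum_sq
          · simp
  calc ∑ l, ‖∑ j, w l j‖ ^ 2 ≤ _ := Finset.sum_le_sum fun l _ => hrow_sq l
    _ = 2 * B ^ 2 * Fintype.card ι * (∑ j, h j ^ 2 + h i ^ 2) := by
      rw [← Finset.mul_sum, Finset.sum_add_distrib]
      simp only [Finset.sum_ite_eq', Finset.mem_univ, if_true, Finset.sum_const,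
        Finset.card_univ, nsmul_eq_mul]
      ring

end Inequalities

section Calculus

variable {𝕜 X ι : Type*} [NontriviallyNormedField 𝕜] [NormedAddCommGroup X] [NormedSpace 𝕜 X]

/-- The projection `(ι → X) → X × X` onto the coordinates `l` and `j`. -/
abbrev pairProj (𝕜 : Type*) {X ι : Type*} [NontriviallyNormedField 𝕜] [NormedAddCommGroup X]
    [NormedSpace 𝕜 X] (l j : ι) : (ι → X) →L[𝕜] X × X :=
  (ContinuousLinearMap.proj l).prod (ContinuousLinearMap.proj j)

theorem hasFDerivAt_comp_pairProj [Finite ι] {F : Type*} [NormedAddCommGroup F] [NormedSpace 𝕜 F]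
    {f : X × X → F} {f' : X × X →L[𝕜] F} {x : ι → X} {l j : ι}
    (hf : HasFDerivAt f f' (x l, x j)) :
    HasFDerivAt (fun y : ι → X => f (y l, y j)) (f'.comp (pairProj 𝕜 l j)) x := by
  cases nonempty_fintype ι
  exact HasFDerivAt.comp (f := fun y : ι → X => (y l, y j)) x hf
    (pairProj 𝕜 (X := X) l j).hasFDerivAt

theorem fderiv_snd_eq_fderiv_uncurry_comp_inr {Y F : Type*} [NormedAddCommGroup Y]
    [NormedSpace 𝕜 Y] [NormedAddCommGroup F] [NormedSpace 𝕜 F] {f : X → Y → F} {u : X} {w : Y}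
    (hf : DifferentiableAt 𝕜 (Function.uncurry f) (u, w)) :
    fderiv 𝕜 (f u) w =
      (fderiv 𝕜 (Function.uncurry f) (u, w)).comp (ContinuousLinearMap.inr 𝕜 X Y) :=
  (HasFDerivAt.comp (g := Function.uncurry f) w hf.hasFDerivAt
    (hasFDerivAt_prodMk_right u w)).fderiv

variable [Fintype ι]

theorem differentiableAt_matrix_det [DecidableEq ι] {M : X → Matrix ι ι 𝕜} {x : X}
    (hM : ∀ i j, DifferentiableAt 𝕜 (fun y => M y i j) x) :
    DifferentiableAt 𝕜 (fun y => (M y).det) x := by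
  simp only [Matrix.det_apply, Units.smul_def, zsmul_eq_mul]
  fun_prop

theorem differentiableAt_matrix_inv_apply [DecidableEq ι] {M : X → Matrix ι ι 𝕜} {x : X}
    (hM : ∀ i j, DifferentiableAt 𝕜 (fun y => M y i j) x) (hdet : IsUnit (M x).det) (i j : ι) :
    DifferentiableAt 𝕜 (fun y => (M y)⁻¹ i j) x := by
  have cramer : (fun y => (M y)⁻¹ i j) =
      fun y => (M y).det⁻¹ * ((M y).updateRow j (Pi.single i 1)).det := by
    ext y
    simp [Matrix.inv_def, Matrix.adjugate_apply]
  rw [cramer]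
  refine ((differentiableAt_matrix_det hM).inv hdet.ne_zero).mul
    (differentiableAt_matrix_det fun a b => ?_)
  obtain rfl | hne := eq_or_ne a j
  · simp
  · simp [Matrix.updateRow_ne hne, hM]

theorem sum_smul_fderiv_of_sum_smul_eq {E : Type*} [NormedAddCommGroup E] [NormedSpace 𝕜 E]
    {M : X → Matrix ι ι 𝕜} {T F : X → ι → E} {x : X}
    (hM : ∀ l m, DifferentiableAt 𝕜 (fun y => M y l m) x) (hT : DifferentiableAt 𝕜 T x)
    (hMT : ∀ y l, ∑ m, M y l m • T y m = F y l) (v : X) (l : ι) :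
    ∑ m, M x l m • fderiv 𝕜 T x v m =
      fderiv 𝕜 (fun y => F y l) x v - ∑ m, fderiv 𝕜 (fun y => M y l m) x v • T x m := by
  have hTm (m : ι) : HasFDerivAt (fun y => T y m) ((ContinuousLinearMap.proj m).comp
      (fderiv 𝕜 T x)) x := hasFDerivAt_pi'.mp hT.hasFDerivAt m
  have hsum := HasFDerivAt.fun_sum (u := Finset.univ)
    fun m _ => (hM l m).hasFDerivAt.fun_smul (hTm m)
  simp only [hMT] at hsum
  rw [hsum.fderiv, eq_sub_iff_add_eq]
  simp [Finset.sum_add_distrib]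

end Calculus

section Gradient

variable {E : Type*} [NormedAddCommGroup E] [InnerProductSpace ℝ E] [CompleteSpace E]

theorem differentiable_gradient {V : E → ℝ} (hV : ContDiff ℝ 2 V) :
    Differentiable ℝ (gradient V) :=
  (InnerProductSpace.toDual ℝ E).symm.toContinuousLinearEquiv.differentiable.comp
    ((hV.fderiv_right (m := 1) le_rfl).differentiable one_ne_zero)

theorem inner_gradient_snd {k : E → E → ℝ} (hk : Differentiable ℝ (Function.uncurry k))
    (e u w : E) :
    inner ℝ e (gradient (k u) w) = fderiv ℝ (Function.uncurry k) (u, w) (0, e) := by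
  rw [inner_gradient_right, fderiv_snd_eq_fderiv_uncurry_comp_inr (hk _)]
  simp

theorem differentiable_gradient_snd {k : E → E → ℝ} (hk : ContDiff ℝ 2 (Function.uncurry k)) :
    Differentiable ℝ fun p : E × E => gradient (k p.1) p.2 := by
  have hfderiv : Differentiable ℝ (fderiv ℝ (Function.uncurry k)) :=
    (hk.fderiv_right (m := 1) le_rfl).differentiable one_ne_zero
  simp only [gradient, fderiv_snd_eq_fderiv_uncurry_comp_inr (hk.differentiable two_ne_zero _)]
  exact (InnerProductSpace.toDual ℝ E).symm.toContinuousLinearEquiv.differentiable.comp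
    (hfderiv.clm_comp (differentiable_const _))

theorem inner_fderiv_gradient_snd {k : E → E → ℝ} (hk : ContDiff ℝ 2 (Function.uncurry k))
    (e : E) (p v : E × E) :
    inner ℝ e (fderiv ℝ (fun q : E × E => gradient (k q.1) q.2) p v) =
      fderiv ℝ (fun q => fderiv ℝ (Function.uncurry k) q (0, e)) p v := by
  have hinner : (fun q => fderiv ℝ (Function.uncurry k) q (0, e)) =
      fun q : E × E => innerSL ℝ e (gradient (k q.1) q.2) :=
    funext fun q => (inner_gradient_snd (hk.differentiable two_ne_zero) e q.1 q.2).symm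
  have hcomp := (innerSL ℝ e).hasFDerivAt.comp p (differentiable_gradient_snd hk p).hasFDerivAt
  rw [hinner]
  exact (congrArg (· v) hcomp.fderiv).symm

end Gradient

section SVGD

variable {E : Type*} [NormedAddCommGroup E] [InnerProductSpace ℝ E] [CompleteSpace E] {N : ℕ}

/-- The SVGD vector field without regularization, i.e. the right-hand side of the linear system
solved by the R-SVGD vector field `steinField`. -/
def svgdField (k : E → E → ℝ) (V : E → ℝ) (x : Fin N → E) (l : Fin N) : E :=
  (N : ℝ)⁻¹ • ∑ j, (k (x l) (x j) • gradient V (x j) - gradient (k (x l)) (x j))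

theorem hasFDerivAt_svgdField_apply {k : E → E → ℝ} {V : E → ℝ}
    (hk : ContDiff ℝ 2 (Function.uncurry k)) (hV : ContDiff ℝ 2 V) (x : Fin N → E) (l : Fin N) :
    HasFDerivAt (fun y => svgdField k V y l)
      ((N : ℝ)⁻¹ • ∑ j, (k (x l) (x j) •
            (fderiv ℝ (gradient V) (x j)).comp (ContinuousLinearMap.proj j) +
          ((fderiv ℝ (Function.uncurry k) (x l, x j)).comp (pairProj ℝ l j)).smulRight
            (gradient V (x j)) -
          (fderiv ℝ (fun p : E × E => gradient (k p.1) p.2) (x l, x j)).comp (pairProj ℝ l j)))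
      x := by
  have hkernel (j : Fin N) := hasFDerivAt_comp_pairProj (x := x) (l := l) (j := j)
    (hk.differentiable two_ne_zero (x l, x j)).hasFDerivAt
  have hgradSnd (j : Fin N) := hasFDerivAt_comp_pairProj (x := x) (l := l) (j := j)
    (differentiable_gradient_snd hk (x l, x j)).hasFDerivAt
  have hgrad (j : Fin N) := HasFDerivAt.comp x (differentiable_gradient hV (x j)).hasFDerivAt
    (ContinuousLinearMap.proj (R := ℝ) (φ := fun _ : Fin N => E) j).hasFDerivAt
  exact (HasFDerivAt.fun_sum fun j _ =>
    ((hkernel j).fun_smul (hgrad j)).fun_sub (hgradSnd j)).fun_const_smul (N : ℝ)⁻¹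

theorem fderiv_svgdField_apply {k : E → E → ℝ} {V : E → ℝ}
    (hk : ContDiff ℝ 2 (Function.uncurry k)) (hV : ContDiff ℝ 2 V) (x v : Fin N → E) (l : Fin N) :
    fderiv ℝ (fun y => svgdField k V y l) x v = (N : ℝ)⁻¹ •
      (∑ j, (fderiv ℝ (Function.uncurry k) (x l, x j) (v l, v j) • gradient V (x j) -
          fderiv ℝ (fun p : E × E => gradient (k p.1) p.2) (x l, x j) (v l, v j)) +
        ∑ j, k (x l) (x j) • fderiv ℝ (gradient V) (x j) (v j)) := by
  rw [(hasFDerivAt_svgdField_apply hk hV x l).fderiv, ← Finset.sum_add_distrib]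
  simp only [smul_apply, sum_apply]
  congr! 2 with j
  simp only [sub_apply, add_apply, smul_apply, ContinuousLinearMap.comp_apply,
    ContinuousLinearMap.proj_apply, ContinuousLinearMap.smulRight_apply,
    ContinuousLinearMap.prod_apply]
  abel

/-- The regularized Gram matrix `(1 - ν) K / N + ν I` of the kernel `k` at the configuration `x`,
where `K a b = k (x a) (x b)`. -/
def regularizedGram {E : Type*} (k : E → E → ℝ) (ν : ℝ) (x : Fin N → E) :
    Matrix (Fin N) (Fin N) ℝ :=
  ((1 - ν) / (N : ℝ)) • Matrix.of (fun a b => k (x a) (x b)) + ν • 1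

theorem one_sub_div_natCast_nonneg {ν : ℝ} (hν : ν ≤ 1) : 0 ≤ (1 - ν) / (N : ℝ) :=
  div_nonneg (sub_nonneg.mpr hν) N.cast_nonneg

theorem isUnit_det_regularizedGram {E : Type*} {k : E → E → ℝ} {ν : ℝ} {x : Fin N → E}
    (hgram : (Matrix.of fun a b => k (x a) (x b)).PosSemidef) (hν : ν ∈ Set.Ioc (0 : ℝ) 1) :
    IsUnit (regularizedGram k ν x).det :=
  (Matrix.PosDef.posSemidef_add (hgram.smul (one_sub_div_natCast_nonneg hν.2))
    (Matrix.PosDef.one.smul hν.1)).det_pos.ne'.isUnit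

theorem hasFDerivAt_regularizedGram_apply {E : Type*} [NormedAddCommGroup E] [NormedSpace ℝ E]
    {k : E → E → ℝ} (hk : Differentiable ℝ (Function.uncurry k)) (ν : ℝ) (x : Fin N → E)
    (l m : Fin N) :
    HasFDerivAt (fun y => regularizedGram k ν y l m) (((1 - ν) / (N : ℝ)) •
      (fderiv ℝ (Function.uncurry k) (x l, x m)).comp (pairProj ℝ l m)) x :=
  ((hasFDerivAt_comp_pairProj (hk (x l, x m)).hasFDerivAt).const_smul ((1 - ν) / (N : ℝ))).add_const
    ((ν • (1 : Matrix (Fin N) (Fin N) ℝ)) l m)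

end SVGD

section RSVGD

variable {d N : ℕ} {k : EuclideanSpace ℝ (Fin d) → EuclideanSpace ℝ (Fin d) → ℝ}
  {V : EuclideanSpace ℝ (Fin d) → ℝ} {ν : ℝ}

theorem sum_regularizedGram_smul_steinField {x : Fin N → EuclideanSpace ℝ (Fin d)}
    (hgram : (Matrix.of fun a b => k (x a) (x b)).PosSemidef) (hν : ν ∈ Set.Ioc (0 : ℝ) 1)
    (l : Fin N) :
    ∑ m, regularizedGram k ν x l m • steinField d N k V ν x m = svgdField k V x l :=
  sum_smul_sum_inv_smul (isUnit_det_regularizedGram hgram hν) (svgdField k V x) l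

theorem sq_mul_sum_sq_norm_le_regularizedGram {x t : Fin N → EuclideanSpace ℝ (Fin d)}
    (hgram : (Matrix.of fun a b => k (x a) (x b)).PosSemidef) (hν : ν ∈ Set.Ioc (0 : ℝ) 1) :
    ν ^ 2 * ∑ l, ‖t l‖ ^ 2 ≤ ∑ l, ‖∑ m, regularizedGram k ν x l m • t m‖ ^ 2 :=
  sq_mul_sum_sq_norm_le_of_posSemidef hgram (one_sub_div_natCast_nonneg hν.2) hν.1.le t

theorem differentiable_steinField (hk : ContDiff ℝ 2 (Function.uncurry k)) (hV : ContDiff ℝ 2 V)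
    (hgram : ∀ x : Fin N → EuclideanSpace ℝ (Fin d),
      (Matrix.of fun a b => k (x a) (x b)).PosSemidef) (hν : ν ∈ Set.Ioc (0 : ℝ) 1) :
    Differentiable ℝ (steinField d N k V ν) := fun x =>
  differentiableAt_pi.mpr fun i => DifferentiableAt.fun_sum fun l _ => DifferentiableAt.fun_smul
    (differentiableAt_matrix_inv_apply
      (fun a b => (hasFDerivAt_regularizedGram_apply (hk.differentiable two_ne_zero) ν x a
        b).differentiableAt)
      (isUnit_det_regularizedGram (hgram x) hν) i l)
    (hasFDerivAt_svgdField_apply hk hV x l).differentiableAt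

theorem sum_regularizedGram_smul_fderiv_steinField (hk : ContDiff ℝ 2 (Function.uncurry k))
    (hV : ContDiff ℝ 2 V)
    (hgram : ∀ x : Fin N → EuclideanSpace ℝ (Fin d),
      (Matrix.of fun a b => k (x a) (x b)).PosSemidef)
    (hν : ν ∈ Set.Ioc (0 : ℝ) 1) (x v : Fin N → EuclideanSpace ℝ (Fin d)) (l : Fin N) :
    ∑ m, regularizedGram k ν x l m • fderiv ℝ (steinField d N k V ν) x v m =
      fderiv ℝ (fun y => svgdField k V y l) x v - ((1 - ν) / (N : ℝ)) •
        ∑ m, fderiv ℝ (Function.uncurry k) (x l, x m) (v l, v m) • steinField d N k V ν x m := by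
  have hM := hasFDerivAt_regularizedGram_apply (N := N) (hk.differentiable two_ne_zero) ν x
  rw [sum_smul_fderiv_of_sum_smul_eq (fun l m => (hM l m).differentiableAt)
    (differentiable_steinField hk hV hgram hν x)
    (fun y l => sum_regularizedGram_smul_steinField (hgram y) hν l)]
  simp [(hM _ _).fderiv, Finset.smul_sum, smul_smul]

/-- The standard basis vector of `(ℝ^d)^N` that moves the `a`-th coordinate of the `i`-th
particle. -/
abbrev coordDir (i : Fin N) (a : Fin d) : Fin N → EuclideanSpace ℝ (Fin d) :=
  Pi.single i (EuclideanSpace.single a (1 : ℝ))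

theorem abs_apply_coordDir_le {L : EuclideanSpace ℝ (Fin d) × EuclideanSpace ℝ (Fin d) →L[ℝ] ℝ}
    {B : ℝ} (hL : ∀ v, |L (pairBasis d v)| ≤ B) (i : Fin N) (a : Fin d) (l j : Fin N) :
    |L (coordDir i a l, coordDir i a j)| ≤ B * incidence i l j := by
  have hfst : |L (coordDir i a l, 0)| ≤ B * (if l = i then 1 else 0) := by
    obtain rfl | hne := eq_or_ne l i
    · simpa [pairBasis] using hL (Sum.inl a)
    · simp [hne, ← Prod.zero_eq_mk]
  have hsnd : |L (0, coordDir i a j)| ≤ B * (if j = i then 1 else 0) := by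
    obtain rfl | hne := eq_or_ne j i
    · simpa [pairBasis] using hL (Sum.inr a)
    · simp [hne, ← Prod.zero_eq_mk]
  calc |L (coordDir i a l, coordDir i a j)|
      = |L (coordDir i a l, 0) + L (0, coordDir i a j)| := by rw [← map_add]; simp
    _ ≤ B * (if l = i then 1 else 0) + B * (if j = i then 1 else 0) :=
        (abs_add_le _ _).trans (add_le_add hfst hsnd)
    _ = B * incidence i l j := (mul_add _ _ _).symm

/-- `k` is a `C²` kernel on `ℝ^d` which is bounded by `B` together with all its partial derivatives
of order one and two. -/
structure HasBoundedPartials (k : EuclideanSpace ℝ (Fin d) → EuclideanSpace ℝ (Fin d) → ℝ)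
    (B : ℝ) : Prop where
  contDiff : ContDiff ℝ 2 (Function.uncurry k)
  abs_le : ∀ x y, |k x y| ≤ B
  abs_fderiv_le : ∀ p v, |fderiv ℝ (Function.uncurry k) p (pairBasis d v)| ≤ B
  abs_fderiv_fderiv_le : ∀ p v w,
    |fderiv ℝ (fun q => fderiv ℝ (Function.uncurry k) q (pairBasis d v)) p (pairBasis d w)| ≤ B

/-- Up to the kernel bound `B`, the size of one summand `k(x,y) ∇V(y) - ∇₂k(x,y)` of the SVGD
field. -/
def driftBound (V : EuclideanSpace ℝ (Fin d) → ℝ) (y : EuclideanSpace ℝ (Fin d)) : ℝ :=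
  ‖gradient V y‖ + √d

namespace HasBoundedPartials

variable {B C : ℝ}

theorem nonneg (hk : HasBoundedPartials k B) : 0 ≤ B := (abs_nonneg _).trans (hk.abs_le 0 0)

theorem norm_gradient_snd_le (hk : HasBoundedPartials k B) (u w : EuclideanSpace ℝ (Fin d)) :
    ‖gradient (k u) w‖ ≤ B * √d := by
  have hcoord (a : Fin d) : |gradient (k u) w a| ≤ B := by
    have hinner := inner_gradient_snd (hk.contDiff.differentiable two_ne_zero)
      (EuclideanSpace.single a 1) u w
    rw [EuclideanSpace.inner_single_left, map_one, one_mul] at hinner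
    exact hinner ▸ hk.abs_fderiv_le (u, w) (Sum.inr a)
  simpa using norm_le_mul_sqrt_card_of_abs_apply_le hk.nonneg hcoord

theorem norm_fderiv_gradient_snd_coordDir_le (hk : HasBoundedPartials k B)
    (p : EuclideanSpace ℝ (Fin d) × EuclideanSpace ℝ (Fin d)) (i : Fin N) (a : Fin d)
    (l j : Fin N) :
    ‖fderiv ℝ (fun q : EuclideanSpace ℝ (Fin d) × EuclideanSpace ℝ (Fin d) =>
        gradient (k q.1) q.2) p (coordDir i a l, coordDir i a j)‖ ≤
      B * incidence i l j * √d := by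
  have hcoord (b : Fin d) : |fderiv ℝ (fun q : EuclideanSpace ℝ (Fin d) × EuclideanSpace ℝ (Fin d)
      => gradient (k q.1) q.2) p (coordDir i a l, coordDir i a j) b| ≤ B * incidence i l j := by
    have hinner := inner_fderiv_gradient_snd hk.contDiff (EuclideanSpace.single b 1) p
      (coordDir i a l, coordDir i a j)
    rw [EuclideanSpace.inner_single_left, map_one, one_mul] at hinner
    exact hinner ▸ abs_apply_coordDir_le (hk.abs_fderiv_fderiv_le p (Sum.inr b)) i a l j
  simpa using norm_le_mul_sqrt_card_of_abs_apply_le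
    (mul_nonneg hk.nonneg (incidence_nonneg i l j)) hcoord

theorem norm_summand_le (hk : HasBoundedPartials k B) (u w : EuclideanSpace ℝ (Fin d)) :
    ‖k u w • gradient V w - gradient (k u) w‖ ≤ B * driftBound V w := by
  rw [driftBound, mul_add]
  refine (norm_sub_le _ _).trans (add_le_add ?_ (hk.norm_gradient_snd_le u w))
  rw [norm_smul]
  gcongr
  exact hk.abs_le u w

theorem norm_fderiv_smul_coordDir_le {F : Type*} [SeminormedAddCommGroup F] [NormedSpace ℝ F]
    (hk : HasBoundedPartials k B) (p : EuclideanSpace ℝ (Fin d) × EuclideanSpace ℝ (Fin d))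
    (i : Fin N) (a : Fin d) (l j : Fin N) (t : F) :
    ‖fderiv ℝ (Function.uncurry k) p (coordDir i a l, coordDir i a j) • t‖ ≤
      B * incidence i l j * ‖t‖ := by
  rw [norm_smul]
  gcongr
  exact abs_apply_coordDir_le (hk.abs_fderiv_le p) i a l j

theorem sum_sq_norm_svgdField_le (hk : HasBoundedPartials k B)
    (x : Fin N → EuclideanSpace ℝ (Fin d)) :
    ∑ l, ‖svgdField k V x l‖ ^ 2 ≤ B ^ 2 * ∑ j, driftBound V (x j) ^ 2 := by
  have hblock (l : Fin N) : ‖svgdField k V x l‖ ^ 2 ≤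
      (N : ℝ)⁻¹ * (B ^ 2 * ∑ j, driftBound V (x j) ^ 2) := by
    have hN : (N : ℝ) ≠ 0 := Nat.cast_ne_zero.mpr l.pos.ne'
    calc ‖svgdField k V x l‖ ^ 2
        ≤ ((N : ℝ)⁻¹ * ∑ j, B * driftBound V (x j)) ^ 2 := by
          rw [svgdField, norm_smul, norm_inv, Real.norm_natCast]
          gcongr
          exact norm_sum_le_of_le _ fun j _ => hk.norm_summand_le (x l) (x j)
      _ = ((N : ℝ)⁻¹ * B) ^ 2 * (∑ j, driftBound V (x j)) ^ 2 := by
          rw [← Finset.mul_sum]; ring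
      _ ≤ ((N : ℝ)⁻¹ * B) ^ 2 * (N * ∑ j, driftBound V (x j) ^ 2) := by
          gcongr
          simpa using
            sq_sum_le_card_mul_sum_sq (s := Finset.univ) (f := fun j => driftBound V (x j))
      _ = (N : ℝ)⁻¹ * (B ^ 2 * ∑ j, driftBound V (x j) ^ 2) := by field_simp
  calc ∑ l, ‖svgdField k V x l‖ ^ 2
      ≤ ∑ _l : Fin N, (N : ℝ)⁻¹ * (B ^ 2 * ∑ j, driftBound V (x j) ^ 2) :=
        Finset.sum_le_sum fun l _ => hblock l
    _ ≤ B ^ 2 * ∑ j, driftBound V (x j) ^ 2 := by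
        rw [Finset.sum_const, Finset.card_univ, Fintype.card_fin, nsmul_eq_mul, ← mul_assoc]
        exact mul_le_of_le_one_left (by positivity) mul_inv_le_one

theorem sum_sq_norm_sum_fderiv_smul_coordDir_le {F : Type*} [SeminormedAddCommGroup F]
    [NormedSpace ℝ F] (hk : HasBoundedPartials k B) (x : Fin N → EuclideanSpace ℝ (Fin d))
    (t : Fin N → F) (i : Fin N) (a : Fin d) :
    ∑ l, ‖∑ j, fderiv ℝ (Function.uncurry k) (x l, x j) (coordDir i a l, coordDir i a j) •
        t j‖ ^ 2 ≤ 2 * B ^ 2 * N * (∑ j, ‖t j‖ ^ 2 + ‖t i‖ ^ 2) := by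
  simpa using sum_sq_norm_sum_le_of_norm_le_incidence
    fun l j => hk.norm_fderiv_smul_coordDir_le (x l, x j) i a l j (t j)

theorem sum_sq_norm_sum_fderiv_summand_coordDir_le (hk : HasBoundedPartials k B)
    (x : Fin N → EuclideanSpace ℝ (Fin d)) (i : Fin N) (a : Fin d) :
    ∑ l, ‖∑ j, (fderiv ℝ (Function.uncurry k) (x l, x j) (coordDir i a l, coordDir i a j) •
          gradient V (x j) -
        fderiv ℝ (fun p : EuclideanSpace ℝ (Fin d) × EuclideanSpace ℝ (Fin d) =>
          gradient (k p.1) p.2) (x l, x j) (coordDir i a l, coordDir i a j))‖ ^ 2 ≤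
      2 * B ^ 2 * N * (∑ j, driftBound V (x j) ^ 2 + driftBound V (x i) ^ 2) := by
  refine (sum_sq_norm_sum_le_of_norm_le_incidence (B := B) (i := i)
    (h := fun j => driftBound V (x j)) fun l j => ?_).trans_eq (by rw [Fintype.card_fin])
  rw [driftBound, mul_add]
  exact (norm_sub_le _ _).trans (add_le_add
    (hk.norm_fderiv_smul_coordDir_le (x l, x j) i a l j _)
    (hk.norm_fderiv_gradient_snd_coordDir_le (x l, x j) i a l j))

theorem sum_sq_norm_sum_smul_fderiv_gradient_coordDir_le (hk : HasBoundedPartials k B)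
    (hHess : ∀ z, ‖fderiv ℝ (gradient V) z‖ ≤ C) (x : Fin N → EuclideanSpace ℝ (Fin d))
    (i : Fin N) (a : Fin d) :
    ∑ l, ‖∑ j, k (x l) (x j) • fderiv ℝ (gradient V) (x j) (coordDir i a j)‖ ^ 2 ≤
      N * (B ^ 2 * C ^ 2) := by
  have hcolumn (l : Fin N) : ∑ j, k (x l) (x j) • fderiv ℝ (gradient V) (x j) (coordDir i a j) =
      k (x l) (x i) • fderiv ℝ (gradient V) (x i) (coordDir i a i) :=
    Finset.sum_eq_single i (fun j _ hj => by simp [hj]) (by simp)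
  have hHessDir : ‖fderiv ℝ (gradient V) (x i) (coordDir i a i)‖ ≤ C := by
    simpa using (ContinuousLinearMap.le_of_opNorm_le _ (hHess (x i)) (coordDir i a i))
  calc ∑ l, ‖∑ j, k (x l) (x j) • fderiv ℝ (gradient V) (x j) (coordDir i a j)‖ ^ 2
      ≤ ∑ _l : Fin N, B ^ 2 * C ^ 2 := by
        gcongr with l
        rw [hcolumn, norm_smul, mul_pow]
        gcongr
        exact hk.abs_le _ _
    _ = N * (B ^ 2 * C ^ 2) := by simp

theorem sum_sq_norm_fderiv_svgdField_coordDir_le (hk : HasBoundedPartials k B)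
    (hV : ContDiff ℝ 2 V) (hHess : ∀ z, ‖fderiv ℝ (gradient V) z‖ ≤ C)
    (x : Fin N → EuclideanSpace ℝ (Fin d)) (i : Fin N) (a : Fin d) :
    ∑ l, ‖fderiv ℝ (fun y => svgdField k V y l) x (coordDir i a)‖ ^ 2 ≤
      2 * (N : ℝ)⁻¹ * (2 * B ^ 2 * (∑ j, driftBound V (x j) ^ 2 + driftBound V (x i) ^ 2) +
        B ^ 2 * C ^ 2) := by
  have hN : (N : ℝ) ≠ 0 := Nat.cast_ne_zero.mpr i.pos.ne'
  calc ∑ l, ‖fderiv ℝ (fun y => svgdField k V y l) x (coordDir i a)‖ ^ 2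
      ≤ ∑ l, (N : ℝ)⁻¹ ^ 2 * (2 * (
          ‖∑ j, (fderiv ℝ (Function.uncurry k) (x l, x j) (coordDir i a l, coordDir i a j) •
              gradient V (x j) -
            fderiv ℝ (fun p : EuclideanSpace ℝ (Fin d) × EuclideanSpace ℝ (Fin d) =>
              gradient (k p.1) p.2) (x l, x j) (coordDir i a l, coordDir i a j))‖ ^ 2 +
          ‖∑ j, k (x l) (x j) • fderiv ℝ (gradient V) (x j) (coordDir i a j)‖ ^ 2)) := by
        gcongr with l
        rw [fderiv_svgdField_apply hk.contDiff hV, norm_smul, mul_pow, norm_inv, Real.norm_natCast]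
        gcongr
        exact norm_add_sq_le_two_mul _ _
    _ ≤ (N : ℝ)⁻¹ ^ 2 * (2 * (
          2 * B ^ 2 * N * (∑ j, driftBound V (x j) ^ 2 + driftBound V (x i) ^ 2) +
          N * (B ^ 2 * C ^ 2))) := by
        rw [← Finset.mul_sum, ← Finset.mul_sum, Finset.sum_add_distrib]
        gcongr
        · exact hk.sum_sq_norm_sum_fderiv_summand_coordDir_le x i a
        · exact hk.sum_sq_norm_sum_smul_fderiv_gradient_coordDir_le hHess x i a
    _ = _ := by field_simp

theorem sq_mul_sum_sq_norm_steinField_le (hk : HasBoundedPartials k B)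
    {x : Fin N → EuclideanSpace ℝ (Fin d)}
    (hgram : (Matrix.of fun a b => k (x a) (x b)).PosSemidef) (hν : ν ∈ Set.Ioc (0 : ℝ) 1) :
    ν ^ 2 * ∑ l, ‖steinField d N k V ν x l‖ ^ 2 ≤ B ^ 2 * ∑ j, driftBound V (x j) ^ 2 :=
  calc ν ^ 2 * ∑ l, ‖steinField d N k V ν x l‖ ^ 2
      ≤ ∑ l, ‖∑ m, regularizedGram k ν x l m • steinField d N k V ν x m‖ ^ 2 :=
        sq_mul_sum_sq_norm_le_regularizedGram hgram hν
    _ = ∑ l, ‖svgdField k V x l‖ ^ 2 := by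
        simp only [sum_regularizedGram_smul_steinField hgram hν]
    _ ≤ B ^ 2 * ∑ j, driftBound V (x j) ^ 2 := hk.sum_sq_norm_svgdField_le x

theorem sq_mul_sum_sq_norm_fderiv_steinField_coordDir_le (hk : HasBoundedPartials k B)
    (hV : ContDiff ℝ 2 V) (hHess : ∀ z, ‖fderiv ℝ (gradient V) z‖ ≤ C)
    (hgram : ∀ x : Fin N → EuclideanSpace ℝ (Fin d),
      (Matrix.of fun a b => k (x a) (x b)).PosSemidef)
    (hν : ν ∈ Set.Ioc (0 : ℝ) 1) (x : Fin N → EuclideanSpace ℝ (Fin d)) (i : Fin N) (a : Fin d) :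
    ν ^ 2 * ∑ l, ‖fderiv ℝ (steinField d N k V ν) x (coordDir i a) l‖ ^ 2 ≤
      3 * (N : ℝ)⁻¹ * (2 * B ^ 2 * (∑ j, driftBound V (x j) ^ 2 + driftBound V (x i) ^ 2) +
        B ^ 2 * C ^ 2 + (1 - ν) ^ 2 * (2 * B ^ 2 *
          (∑ j, ‖steinField d N k V ν x j‖ ^ 2 + ‖steinField d N k V ν x i‖ ^ 2))) := by
  have hN : (N : ℝ) ≠ 0 := Nat.cast_ne_zero.mpr i.pos.ne'
  calc ν ^ 2 * ∑ l, ‖fderiv ℝ (steinField d N k V ν) x (coordDir i a) l‖ ^ 2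
      ≤ ∑ l, ‖fderiv ℝ (fun y => svgdField k V y l) x (coordDir i a) - ((1 - ν) / (N : ℝ)) •
          ∑ m, fderiv ℝ (Function.uncurry k) (x l, x m) (coordDir i a l, coordDir i a m) •
            steinField d N k V ν x m‖ ^ 2 := by
        simp only [← sum_regularizedGram_smul_fderiv_steinField hk.contDiff hV hgram hν]
        exact sq_mul_sum_sq_norm_le_regularizedGram (hgram x) hν
    _ ≤ 3 / 2 * ∑ l, ‖fderiv ℝ (fun y => svgdField k V y l) x (coordDir i a)‖ ^ 2 +
          3 * (((1 - ν) / N) ^ 2 * ∑ l, ‖∑ m, fderiv ℝ (Function.uncurry k) (x l, x m)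
            (coordDir i a l, coordDir i a m) • steinField d N k V ν x m‖ ^ 2) := by
        simp only [Finset.mul_sum, ← Finset.sum_add_distrib]
        gcongr with l
        refine (norm_sub_sq_le_three_halves_mul_add _ _).trans_eq ?_
        rw [norm_smul, mul_pow, Real.norm_eq_abs, sq_abs]
    _ ≤ 3 / 2 * (2 * (N : ℝ)⁻¹ * (2 * B ^ 2 * (∑ j, driftBound V (x j) ^ 2 +
          driftBound V (x i) ^ 2) + B ^ 2 * C ^ 2)) + 3 * (((1 - ν) / N) ^ 2 * (2 * B ^ 2 * N *
          (∑ j, ‖steinField d N k V ν x j‖ ^ 2 + ‖steinField d N k V ν x i‖ ^ 2))) := by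
        gcongr
        · exact hk.sum_sq_norm_fderiv_svgdField_coordDir_le hV hHess x i a
        · exact hk.sum_sq_norm_sum_fderiv_smul_coordDir_le x (steinField d N k V ν x) i a
    _ = _ := by field_simp

theorem sq_mul_sum_sq_norm_fderiv_steinField_le (hk : HasBoundedPartials k B)
    (hV : ContDiff ℝ 2 V) (hHess : ∀ z, ‖fderiv ℝ (gradient V) z‖ ≤ C)
    (hgram : ∀ x : Fin N → EuclideanSpace ℝ (Fin d),
      (Matrix.of fun a b => k (x a) (x b)).PosSemidef)
    (hν : ν ∈ Set.Ioc (0 : ℝ) 1) (x : Fin N → EuclideanSpace ℝ (Fin d)) :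
    ν ^ 2 * ∑ i, ∑ a, ∑ l, ‖fderiv ℝ (steinField d N k V ν) x (coordDir i a) l‖ ^ 2 ≤
      3 * d * (4 * B ^ 2 * ∑ j, driftBound V (x j) ^ 2 + B ^ 2 * C ^ 2 +
        (1 - ν) ^ 2 * (4 * B ^ 2 * ∑ j, ‖steinField d N k V ν x j‖ ^ 2)) := by
  obtain rfl | hN := N.eq_zero_or_pos
  · simp only [Finset.univ_eq_empty, Finset.sum_empty, mul_zero, zero_add, add_zero]
    positivity
  have hN_one : (1 : ℝ) ≤ N := by exact_mod_cast hN
  set H := ∑ j, driftBound V (x j) ^ 2 with hH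
  set S := ∑ j, ‖steinField d N k V ν x j‖ ^ 2 with hS
  calc ν ^ 2 * ∑ i, ∑ a, ∑ l, ‖fderiv ℝ (steinField d N k V ν) x (coordDir i a) l‖ ^ 2
      ≤ ∑ i, ∑ _a : Fin d, 3 * (N : ℝ)⁻¹ * (2 * B ^ 2 * (H + driftBound V (x i) ^ 2) +
          B ^ 2 * C ^ 2 + (1 - ν) ^ 2 * (2 * B ^ 2 * (S + ‖steinField d N k V ν x i‖ ^ 2))) := by
        rw [Finset.mul_sum]
        simp only [Finset.mul_sum (Finset.univ : Finset (Fin d))]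
        exact Finset.sum_le_sum fun i _ => Finset.sum_le_sum fun a _ =>
          hk.sq_mul_sum_sq_norm_fderiv_steinField_coordDir_le hV hHess hgram hν x i a
    _ = 3 * d * (2 * B ^ 2 * ((1 + (N : ℝ)⁻¹) * H) + B ^ 2 * C ^ 2 +
          (1 - ν) ^ 2 * (2 * B ^ 2 * ((1 + (N : ℝ)⁻¹) * S))) := by
        simp only [Finset.sum_const, Finset.card_univ, Fintype.card_fin, nsmul_eq_mul,
          Finset.sum_add_distrib, ← Finset.mul_sum, ← hH, ← hS]
        field_simp
    _ ≤ 3 * d * (2 * B ^ 2 * (2 * H) + B ^ 2 * C ^ 2 + (1 - ν) ^ 2 * (2 * B ^ 2 * (2 * S))) := by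
        have htwo : 1 + (N : ℝ)⁻¹ ≤ 2 := by linarith [inv_le_one_of_one_le₀ hN_one]
        gcongr
    _ = _ := by ring

theorem sum_sq_norm_fderiv_steinField_le (hk : HasBoundedPartials k B) (hB : 1 ≤ B)
    (hV : ContDiff ℝ 2 V) (hHess : ∀ z, ‖fderiv ℝ (gradient V) z‖ ≤ C)
    (hgram : ∀ x : Fin N → EuclideanSpace ℝ (Fin d),
      (Matrix.of fun a b => k (x a) (x b)).PosSemidef)
    (hν : ν ∈ Set.Ioc (0 : ℝ) 1) (x : Fin N → EuclideanSpace ℝ (Fin d)) :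
    ∑ i, ∑ a, ∑ l, ‖fderiv ℝ (steinField d N k V ν) x (coordDir i a) l‖ ^ 2 ≤
      12 * ν⁻¹ ^ 4 * B ^ 4 * d * ∑ j, driftBound V (x j) ^ 2 +
        3 * ν⁻¹ ^ 2 * B ^ 2 * C ^ 2 * d := by
  have hν0 : 0 < ν := hν.1
  have hHS := hk.sq_mul_sum_sq_norm_fderiv_steinField_le hV hHess hgram hν x
  have hfield := hk.sq_mul_sum_sq_norm_steinField_le (V := V) (hgram x) hν
  have hH0 : 0 ≤ ∑ j, driftBound V (x j) ^ 2 := by positivity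
  generalize ∑ j, driftBound V (x j) ^ 2 = H at *
  generalize ∑ j, ‖steinField d N k V ν x j‖ ^ 2 = S at *
  generalize ∑ i, ∑ a, ∑ l, ‖fderiv ℝ (steinField d N k V ν) x (coordDir i a) l‖ ^ 2 = Z at *
  have hpow : B ^ 2 ≤ B ^ 4 := pow_le_pow_right₀ hB (by norm_num)
  have hweights : ν ^ 2 + (1 - ν) ^ 2 ≤ 1 := by nlinarith [hν.2]
  have hscaled : ν ^ 4 * Z ≤ 12 * d * B ^ 4 * H + 3 * d * ν ^ 2 * (B ^ 2 * C ^ 2) :=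
    calc ν ^ 4 * Z = ν ^ 2 * (ν ^ 2 * Z) := by ring
      _ ≤ ν ^ 2 * (3 * d * (4 * B ^ 2 * H + B ^ 2 * C ^ 2 + (1 - ν) ^ 2 * (4 * B ^ 2 * S))) := by
          gcongr
      _ = 12 * d * (ν ^ 2 * (B ^ 2 * H) + (1 - ν) ^ 2 * (B ^ 2 * (ν ^ 2 * S))) +
            3 * d * ν ^ 2 * (B ^ 2 * C ^ 2) := by ring
      _ ≤ 12 * d * (ν ^ 2 * (B ^ 4 * H) + (1 - ν) ^ 2 * (B ^ 2 * (B ^ 2 * H))) +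
            3 * d * ν ^ 2 * (B ^ 2 * C ^ 2) := by gcongr
      _ = 12 * d * B ^ 4 * H * (ν ^ 2 + (1 - ν) ^ 2) + 3 * d * ν ^ 2 * (B ^ 2 * C ^ 2) := by ring
      _ ≤ 12 * d * B ^ 4 * H + 3 * d * ν ^ 2 * (B ^ 2 * C ^ 2) := by
          grw [mul_le_of_le_one_right (by positivity) hweights]
  calc Z ≤ (12 * d * B ^ 4 * H + 3 * d * ν ^ 2 * (B ^ 2 * C ^ 2)) / ν ^ 4 :=
        (le_div_iff₀' (by positivity)).mpr hscaled
    _ = _ := by field_simp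

end HasBoundedPartials

theorem sum_sq_driftBound_le {A α : ℝ} (hα : α ∈ Set.Icc (0 : ℝ) (1 / 2)) (hV : ∀ y, 0 ≤ V y)
    (hVgrad : ∀ y, ‖gradient V y‖ ≤ A * V y ^ α) (x : Fin N → EuclideanSpace ℝ (Fin d)) :
    ∑ j, driftBound V (x j) ^ 2 ≤
      2 * N * (A ^ 2 * ((N : ℝ)⁻¹ * ∑ j, V (x j)) ^ (2 * α) + d) := by
  have hpoint (y : EuclideanSpace ℝ (Fin d)) :
      driftBound V y ^ 2 ≤ 2 * (A ^ 2 * V y ^ (2 * α) + d) :=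
    calc driftBound V y ^ 2 ≤ 2 * (‖gradient V y‖ ^ 2 + √d ^ 2) := add_sq_le
      _ ≤ 2 * ((A * V y ^ α) ^ 2 + d) := by
          rw [Real.sq_sqrt d.cast_nonneg]
          gcongr
          exact hVgrad y
      _ = 2 * (A ^ 2 * V y ^ (2 * α) + d) := by
          rw [mul_pow, mul_comm 2 α, Real.rpow_mul (hV y), Real.rpow_two]
  have hjensen := sum_rpow_le_card_mul_mean_rpow Finset.univ (fun j _ => hV (x j))
    (p := 2 * α) ⟨by linarith [hα.1], by linarith [hα.2]⟩
  rw [Finset.card_univ, Fintype.card_fin] at hjensen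
  calc ∑ j, driftBound V (x j) ^ 2 ≤ ∑ j, 2 * (A ^ 2 * V (x j) ^ (2 * α) + d) :=
        Finset.sum_le_sum fun j _ => hpoint (x j)
    _ = 2 * (A ^ 2 * ∑ j, V (x j) ^ (2 * α) + N * d) := by
        simp [← Finset.mul_sum, Finset.sum_add_distrib]
    _ ≤ 2 * (A ^ 2 * (N * ((N : ℝ)⁻¹ * ∑ j, V (x j)) ^ (2 * α)) + N * d) := by gcongr
    _ = _ := by ring

end RSVGD

/-- The R-SVGD vector field `𝖳_ν : ℝ^{dN} → ℝ^{dN}` is differentiable and the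
Frobenius (Hilbert–Schmidt) norm of its Jacobian satisfies
`‖D𝖳_ν(x̲)‖²_HS ≤ 27ν⁻⁴A²B⁴Nd((1/N)Σⱼ V(xʲ))^{2α} + 27ν⁻⁴B⁴Nd² + 9ν⁻²B²C_V²d`.
The Frobenius norm squared is written as the sum, over the standard orthonormal basis vectors
`Pi.single i (EuclideanSpace.single a 1)` of `(ℝ^d)^N`, of the squared Euclidean norms of their
images under the Fréchet derivative. -/
theorem statement_12 {d N : ℕ}
    (k : EuclideanSpace ℝ (Fin d) → EuclideanSpace ℝ (Fin d) → ℝ)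
    (V : EuclideanSpace ℝ (Fin d) → ℝ) (B A α ν C_V : ℝ)
    (hB : 1 ≤ B)
    (hksymm : ∀ x y, k x y = k y x)
    (hgram : ∀ (m : ℕ) (y : Fin m → EuclideanSpace ℝ (Fin d)),
      (Matrix.of fun a b : Fin m => k (y a) (y b)).PosSemidef)
    (hkC2 : ContDiff ℝ 2 (fun p : EuclideanSpace ℝ (Fin d) × EuclideanSpace ℝ (Fin d) =>
      k p.1 p.2))
    (hk0 : ∀ x y, |k x y| ≤ B)
    (hk1 : ∀ (p : EuclideanSpace ℝ (Fin d) × EuclideanSpace ℝ (Fin d)) (v : Fin d ⊕ Fin d),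
      |fderiv ℝ (fun q : EuclideanSpace ℝ (Fin d) × EuclideanSpace ℝ (Fin d) => k q.1 q.2) p
        (pairBasis d v)| ≤ B)
    (hk2 : ∀ (p : EuclideanSpace ℝ (Fin d) × EuclideanSpace ℝ (Fin d)) (v w : Fin d ⊕ Fin d),
      |fderiv ℝ (fun q : EuclideanSpace ℝ (Fin d) × EuclideanSpace ℝ (Fin d) =>
          fderiv ℝ (fun r : EuclideanSpace ℝ (Fin d) × EuclideanSpace ℝ (Fin d) => k r.1 r.2) q
            (pairBasis d v)) p (pairBasis d w)| ≤ B)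
    (hVC2 : ContDiff ℝ 2 V)
    (hHess : ∀ z, ‖fderiv ℝ (fun y => gradient V y) z‖ ≤ C_V)
    (hVpos : ∀ x, 0 < V x)
    (hA : 0 < A) (hα : α ∈ Set.Icc (0 : ℝ) (1 / 2))
    (hVgrad : ∀ x, ‖gradient V x‖ ≤ A * V x ^ α)
    (hν : ν ∈ Set.Ioc (0 : ℝ) 1) :
    Differentiable ℝ (steinField d N k V ν) ∧
    ∀ x : Fin N → EuclideanSpace ℝ (Fin d),
      (∑ i : Fin N, ∑ a : Fin d, ∑ j : Fin N,
          ‖fderiv ℝ (steinField d N k V ν) x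
              (Pi.single i (EuclideanSpace.single a (1 : ℝ))) j‖ ^ 2) ≤
        27 * ν⁻¹ ^ 4 * A ^ 2 * B ^ 4 * N * d *
            (((N : ℝ)⁻¹ * ∑ j : Fin N, V (x j)) ^ (2 * α)) +
          27 * ν⁻¹ ^ 4 * B ^ 4 * N * d ^ 2 +
          9 * ν⁻¹ ^ 2 * B ^ 2 * C_V ^ 2 * d := by
  have hk : HasBoundedPartials k B := ⟨hkC2, hk0, hk1, hk2⟩
  refine ⟨differentiable_steinField hkC2 hVC2 (hgram N) hν, fun x => ?_⟩
  set W := ((N : ℝ)⁻¹ * ∑ j, V (x j)) ^ (2 * α)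
  have hW : 0 ≤ W :=
    Real.rpow_nonneg (mul_nonneg (by positivity) (Finset.sum_nonneg fun j _ => (hVpos _).le)) _
  have hdrift : ∑ j, driftBound V (x j) ^ 2 ≤ 2 * N * (A ^ 2 * W + d) :=
    sum_sq_driftBound_le hα (fun y => (hVpos y).le) hVgrad x
  calc ∑ i, ∑ a, ∑ j, ‖fderiv ℝ (steinField d N k V ν) x (coordDir i a) j‖ ^ 2
      ≤ 12 * ν⁻¹ ^ 4 * B ^ 4 * d * ∑ j, driftBound V (x j) ^ 2 +
          3 * ν⁻¹ ^ 2 * B ^ 2 * C_V ^ 2 * d :=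
        hk.sum_sq_norm_fderiv_steinField_le hB hVC2 hHess (hgram N) hν x
    _ ≤ 12 * ν⁻¹ ^ 4 * B ^ 4 * d * (2 * N * (A ^ 2 * W + d)) +
          3 * ν⁻¹ ^ 2 * B ^ 2 * C_V ^ 2 * d := by gcongr
    _ = 24 * ν⁻¹ ^ 4 * A ^ 2 * B ^ 4 * N * d * W + 24 * ν⁻¹ ^ 4 * B ^ 4 * N * d ^ 2 +
          3 * ν⁻¹ ^ 2 * B ^ 2 * C_V ^ 2 * d := by ring
    _ ≤ 27 * ν⁻¹ ^ 4 * A ^ 2 * B ^ 4 * N * d * W + 27 * ν⁻¹ ^ 4 * B ^ 4 * N * d ^ 2 +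
          9 * ν⁻¹ ^ 2 * B ^ 2 * C_V ^ 2 * d := by gcongr <;> norm_num

end
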